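/- Let s = (β_1, β_2, β_3) ∈ B_3^3 be an irreducible braid system whose Hurwitz orbit s·B_3 is finite, and suppose s is (2,3)-periodic, i.e. e(β_1) ≡ ±1 (mod 6) and e(β_2) ≡ ±2 (mod 6) and e(β_3) ≡ ±1 (mod 6). Then (1) s·(c_1c_2)^2 ≠ s, and (2) s·(c_1c_2)^2 is a simple vertex if and only if s is a simple vertex, where a braid system t ∈ B_3^3 is called a simple vertex if t·c_1 = t or t·c_2 = t. -/

import Mathlib

open FreeGroup in
/-- The braid relations on `m` strands (generators indexed 0-based by `Fin (m-1)`). -/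
def braidRels (m : ℕ) : Set (FreeGroup (Fin (m - 1))) :=
  {r | ∃ i j : Fin (m - 1), (i.val + 2 ≤ j.val ∨ j.val + 2 ≤ i.val) ∧
        r = of i * of j * (of j * of i)⁻¹} ∪
  {r | ∃ i j : Fin (m - 1), (i.val + 1 = j.val ∨ j.val + 1 = i.val) ∧
        r = of i * of j * of i * (of j * of i * of j)⁻¹}

/-- The braid group on `m` strands. -/
abbrev BraidGroup (m : ℕ) := PresentedGroup (braidRels m)

/-- The Artin generator `σ_i` (1-based index `1 ≤ i ≤ m-1`); junk value `1` out of range. -/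
def braidGen (m : ℕ) (i : ℕ) : BraidGroup m :=
  if h : 1 ≤ i ∧ i ≤ m - 1 then PresentedGroup.of ⟨i - 1, by omega⟩ else 1

/-- A braid is periodic if some positive power of it is central. -/
def IsPeriodic {m : ℕ} (β : BraidGroup m) : Prop :=
  ∃ k : ℕ, 1 ≤ k ∧ β ^ k ∈ Subgroup.center (BraidGroup m)

/-- The elementary Hurwitz move at (0-based) position `i`, as a bijection on `n`-tuples. -/
def hEquiv {G : Type*} [Group G] {n : ℕ} (i : Fin (n - 1)) : Equiv.Perm (Fin n → G) where
  toFun s := fun k =>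
    if k.val = i.val then s ⟨i.val + 1, by have := i.isLt; omega⟩
    else if k.val = i.val + 1 then
      (s ⟨i.val + 1, by have := i.isLt; omega⟩)⁻¹ * s ⟨i.val, by have := i.isLt; omega⟩ *
        s ⟨i.val + 1, by have := i.isLt; omega⟩
    else s k
  invFun t := fun k =>
    if k.val = i.val then
      t ⟨i.val, by have := i.isLt; omega⟩ * t ⟨i.val + 1, by have := i.isLt; omega⟩ *
        (t ⟨i.val, by have := i.isLt; omega⟩)⁻¹
    else if k.val = i.val + 1 then t ⟨i.val, by have := i.isLt; omega⟩
    else t k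
  left_inv s := by
    funext k
    have hlt := i.isLt
    rcases k with ⟨kv, hkv⟩
    by_cases h1 : kv = i.val
    · subst h1
      simp [mul_assoc]
    · by_cases h2 : kv = i.val + 1
      · subst h2
        simp
      · simp [h1, h2]
  right_inv t := by
    funext k
    have hlt := i.isLt
    rcases k with ⟨kv, hkv⟩
    by_cases h1 : kv = i.val
    · subst h1
      simp [mul_assoc]
    · by_cases h2 : kv = i.val + 1
      · subst h2
        simp [mul_assoc]
      · simp [h1, h2]

/-- The (right) Hurwitz action of a word in the generators `σ_1, …, σ_{n-1}` of `B_n`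
on `n`-tuples of elements of a group `G`: `hurwitzAct (w₁ * w₂) s = hurwitzAct w₂ (hurwitzAct w₁ s)`. -/
def hurwitzAct {G : Type*} [Group G] {n : ℕ} (w : FreeGroup (Fin (n - 1))) (s : Fin n → G) :
    Fin n → G :=
  (MulOpposite.unop (FreeGroup.lift (fun i => MulOpposite.op (hEquiv (G := G) (n := n) i)) w)) s

/-- The Hurwitz orbit of a braid system. -/
def hurwitzOrbit {G : Type*} [Group G] {n : ℕ} (s : Fin n → G) : Set (Fin n → G) :=
  {t | ∃ w : FreeGroup (Fin (n - 1)), hurwitzAct w s = t}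

/-- The generator `σ_i` (1-based) as a word acting on length-`n` systems. -/
def genWord (n : ℕ) (i : ℕ) : FreeGroup (Fin (n - 1)) :=
  if h : 1 ≤ i ∧ i ≤ n - 1 then FreeGroup.of ⟨i - 1, by omega⟩ else 1

/-- The pure braid word `c_i = (σ_1⁻¹ ⋯ σ_{i-1}⁻¹) σ_i² (σ_{i-1} ⋯ σ_1)`. -/
def cWord (n : ℕ) (i : ℕ) : FreeGroup (Fin (n - 1)) :=
  ((List.range (i - 1)).map (fun t => (genWord n (t + 1))⁻¹)).prod *
    genWord n i ^ 2 *
    ((List.range (i - 1)).reverse.map (fun t => genWord n (t + 1))).prod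

/-- The word `Δ_{(i,j)} = (σ_i σ_{i+1} ⋯ σ_j)(σ_i ⋯ σ_{j-1}) ⋯ (σ_i σ_{i+1})(σ_i)`. -/
def deltaWord (n i j : ℕ) : FreeGroup (Fin (n - 1)) :=
  ((List.range (j - i + 1)).map (fun t =>
    ((List.range (j - t - i + 1)).map (fun u => genWord n (i + u))).prod)).prod

/-- The exponent-sum homomorphism, valued in `Multiplicative ℤ`. -/
def expSumHom {m : ℕ} : BraidGroup m →* Multiplicative ℤ :=
  PresentedGroup.toGroup (f := fun _ => Multiplicative.ofAdd 1) (by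
    rintro r (⟨i, j, -, rfl⟩ | ⟨i, j, -, rfl⟩) <;>
      simp <;> group)

/-- The exponent sum of a braid: `e(σ_i) = 1`. -/
def esum {m : ℕ} (β : BraidGroup m) : ℤ := Multiplicative.toAdd (expSumHom β)

/-- A braid system is reducible if some non-trivial partition of the index set has all
entries from the two parts commuting. -/
def IsReducible {G : Type*} [Group G] {n : ℕ} (s : Fin n → G) : Prop :=
  ∃ I : Set (Fin n), I.Nonempty ∧ Iᶜ.Nonempty ∧ ∀ i ∈ I, ∀ j ∈ Iᶜ, Commute (s i) (s j)

/-- A braid system `t` of degree 3, length 3 is a simple vertex if `t·c_1 = t` or `t·c_2 = t`. -/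
def SimpleVertex (t : Fin 3 → BraidGroup 3) : Prop :=
  hurwitzAct (cWord 3 1) t = t ∨ hurwitzAct (cWord 3 2) t = t

/-!
Put `P = β_2 β_3` and `C = β_1 β_2 β_3`. The word `σ_2²` conjugates `(β_2, β_3)` by `P`, and
`σ_2² c_1 c_2`, the full twist, conjugates the whole system by `C`. A finite orbit therefore forces
a positive power of `P` to commute with `β_2` and `β_3`.

Modulo powers of the full twist `Δ²`, the group `B_3` embeds in `PSL(2, ℤ)`, where an element with
a power commuting with `u` commutes with `u` or has order 2 or 3, and where the centralizer of a
nontrivial element lifts to a commutative subgroup of `B_3`. Order 3 is incompatible with the odd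
exponent sum of `P`, so `P²` commutes with `β_2` and `β_3`, and `s·(c_1 c_2)²` is the conjugate of
`s` by `C²`. If this conjugate were `s`, then either `C²` is not a power of `Δ²` and all `β_i`
commute, or `C` is itself a power of `Δ²`. In the latter case `s` is reducible if `β_2` and `β_3`
commute, and otherwise `P²` is a power of `Δ²`, which makes `e(P)`, and hence `e(β_1)`, divisible
by 3.
-/

section Hurwitz

variable {G H F : Type*} [Group G] [Group H] [FunLike F G H] [MonoidHomClass F G H] {n : ℕ}

lemma inv_mul_mul_eq_self_iff_commute {p u : G} : p⁻¹ * u * p = u ↔ Commute p u := by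
  rw [mul_assoc, inv_mul_eq_iff_eq_mul, eq_comm, commute_iff_eq]

lemma hurwitzAct_one (s : Fin n → G) : hurwitzAct 1 s = s := by
  simp [hurwitzAct]

lemma hurwitzAct_mul (v w : FreeGroup (Fin (n - 1))) (s : Fin n → G) :
    hurwitzAct (v * w) s = hurwitzAct w (hurwitzAct v s) := by
  simp [hurwitzAct]

lemma hurwitzAct_of (i : Fin (n - 1)) (s : Fin n → G) :
    hurwitzAct (.of i) s = hEquiv i s := by
  simp [hurwitzAct]

lemma hurwitzAct_injective (w : FreeGroup (Fin (n - 1))) :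
    Function.Injective (hurwitzAct w : (Fin n → G) → Fin n → G) :=
  Equiv.injective _

lemma hurwitzAct_inv_comp {v : FreeGroup (Fin (n - 1))} {f : G → H}
    (hv : ∀ s : Fin n → G, hurwitzAct v (f ∘ s) = f ∘ hurwitzAct v s) (s : Fin n → G) :
    hurwitzAct v⁻¹ (f ∘ s) = f ∘ hurwitzAct v⁻¹ s := by
  apply hurwitzAct_injective v
  rw [hv, ← hurwitzAct_mul, ← hurwitzAct_mul, inv_mul_cancel, hurwitzAct_one, hurwitzAct_one]

lemma hurwitzAct_comp (f : F) (w : FreeGroup (Fin (n - 1))) (s : Fin n → G) :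
    hurwitzAct w (f ∘ s) = f ∘ hurwitzAct w s := by
  induction w using FreeGroup.induction_on generalizing s with
  | C1 => simp only [hurwitzAct_one]
  | of i =>
    funext k
    simp only [hurwitzAct_of, hEquiv, Equiv.coe_fn_mk, Function.comp_apply]
    split_ifs <;> simp
  | inv_of i ih => exact hurwitzAct_inv_comp ih s
  | mul v w hv hw => rw [hurwitzAct_mul, hurwitzAct_mul, hv, hw]

lemma exists_hurwitzAct_pow_eq_self {s : Fin n → G} (hs : (hurwitzOrbit s).Finite)
    (w : FreeGroup (Fin (n - 1))) : ∃ k ≠ 0, hurwitzAct (w ^ k) s = s := by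
  obtain ⟨i, j, hij, h⟩ := Set.Finite.exists_lt_map_eq_of_forall_mem (t := hurwitzOrbit s)
    (f := fun k : ℕ ↦ hurwitzAct (w ^ k) s) (fun k ↦ ⟨w ^ k, rfl⟩) hs
  refine ⟨j - i, (Nat.sub_pos_of_lt hij).ne', hurwitzAct_injective (w ^ i) ?_⟩
  rw [← hurwitzAct_mul, ← pow_add, Nat.sub_add_cancel hij.le, ← h]

end Hurwitz

section HurwitzThree

variable {G : Type*} [Group G]

lemma hurwitzAct_genWord_three_one (s : Fin 3 → G) :
    hurwitzAct (genWord 3 1) s = ![s 1, (s 1)⁻¹ * s 0 * s 1, s 2] := by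
  rw [genWord, dif_pos (by simp), hurwitzAct_of]
  funext k
  fin_cases k <;> simp [hEquiv]

lemma hurwitzAct_genWord_three_two (s : Fin 3 → G) :
    hurwitzAct (genWord 3 2) s = ![s 0, s 2, (s 2)⁻¹ * s 1 * s 2] := by
  rw [genWord, dif_pos (by simp), hurwitzAct_of]
  funext k
  fin_cases k <;> simp [hEquiv]

lemma cWord_three_one_mul_two :
    cWord 3 1 * cWord 3 2 = genWord 3 1 * genWord 3 2 ^ 2 * genWord 3 1 := by
  simp [cWord, pow_two, mul_assoc]

lemma hurwitzAct_genWord_sq_pow (s : Fin 3 → G) (k : ℕ) :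
    hurwitzAct ((genWord 3 2 ^ 2) ^ k) s =
      ![s 0, ((s 1 * s 2) ^ k)⁻¹ * s 1 * (s 1 * s 2) ^ k,
        ((s 1 * s 2) ^ k)⁻¹ * s 2 * (s 1 * s 2) ^ k] := by
  induction k with
  | zero =>
    rw [pow_zero, hurwitzAct_one]
    funext k
    fin_cases k <;> simp
  | succ k ih =>
    rw [pow_succ, hurwitzAct_mul, ih, pow_two, hurwitzAct_mul]
    simp only [hurwitzAct_genWord_three_two]
    funext j
    fin_cases j <;> simp [pow_succ', mul_assoc]

lemma hurwitzAct_genWord_sq_pow_eq_self_iff {s : Fin 3 → G} {k : ℕ} :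
    hurwitzAct ((genWord 3 2 ^ 2) ^ k) s = s ↔
      Commute ((s 1 * s 2) ^ k) (s 1) ∧ Commute ((s 1 * s 2) ^ k) (s 2) := by
  rw [hurwitzAct_genWord_sq_pow, funext_iff, Fin.forall_fin_succ, Fin.forall_fin_two]
  simp [inv_mul_mul_eq_self_iff_commute]

/-- The word `σ_2² c_1 c_2` represents the full twist of `B_3`. -/
lemma hurwitzAct_fullTwist (s : Fin 3 → G) :
    hurwitzAct (genWord 3 2 ^ 2 * (cWord 3 1 * cWord 3 2)) s =
      MulAut.conj (s 0 * s 1 * s 2)⁻¹ ∘ s := by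
  rw [cWord_three_one_mul_two]
  simp only [pow_two, hurwitzAct_mul, hurwitzAct_genWord_three_one, hurwitzAct_genWord_three_two]
  funext k
  fin_cases k <;> simp [mul_assoc]

lemma prod_hurwitzAct_genWord_sq_pow (s : Fin 3 → G) (k : ℕ) :
    hurwitzAct ((genWord 3 2 ^ 2) ^ k) s 0 * hurwitzAct ((genWord 3 2 ^ 2) ^ k) s 1 *
      hurwitzAct ((genWord 3 2 ^ 2) ^ k) s 2 = s 0 * s 1 * s 2 := by
  have h : (s 1 * s 2) ^ k * (s 1 * s 2) = s 1 * s 2 * (s 1 * s 2) ^ k :=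
    (Commute.pow_self _ _).eq
  rw [hurwitzAct_genWord_sq_pow]
  simp only [Matrix.cons_val]
  calc
    _ = s 0 * ((s 1 * s 2) ^ k)⁻¹ * (s 1 * s 2 * (s 1 * s 2) ^ k) := by
      simp only [mul_assoc, mul_inv_cancel_left]
    _ = s 0 * s 1 * s 2 := by
      rw [← h, mul_assoc (s 0), inv_mul_cancel_left, mul_assoc]

lemma hurwitzAct_genWord_sq_pow_mul_cWord_pow (s : Fin 3 → G) (k : ℕ) :
    hurwitzAct ((genWord 3 2 ^ 2) ^ k * (cWord 3 1 * cWord 3 2) ^ k) s =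
      MulAut.conj ((s 0 * s 1 * s 2) ^ k)⁻¹ ∘ s := by
  induction k with
  | zero =>
    funext j
    simp [hurwitzAct_one]
  | succ k ih =>
    rw [pow_succ (genWord 3 2 ^ 2), pow_succ' (cWord 3 1 * cWord 3 2), mul_assoc,
      ← mul_assoc (genWord 3 2 ^ 2), hurwitzAct_mul, hurwitzAct_mul, hurwitzAct_fullTwist,
      prod_hurwitzAct_genWord_sq_pow, hurwitzAct_comp, ← hurwitzAct_mul, ih]
    funext j
    simp [pow_succ, mul_assoc]

lemma hurwitzAct_cWord_pow_of_genWord_fixed {s : Fin 3 → G} {k : ℕ}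
    (hs : hurwitzAct ((genWord 3 2 ^ 2) ^ k) s = s) :
    hurwitzAct ((cWord 3 1 * cWord 3 2) ^ k) s = MulAut.conj ((s 0 * s 1 * s 2) ^ k)⁻¹ ∘ s := by
  rw [← hurwitzAct_genWord_sq_pow_mul_cWord_pow, hurwitzAct_mul, hs]

end HurwitzThree

lemma isReducible_of_commute {G : Type*} [Group G] {s : Fin 3 → G} (h₁ : Commute (s 0) (s 1))
    (h₂ : Commute (s 0) (s 2)) : IsReducible s := by
  refine ⟨{0}, ⟨0, rfl⟩, ⟨1, by simp⟩, ?_⟩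
  rintro _ rfl j hj
  fin_cases j
  · exact absurd rfl hj
  · exact h₁
  · exact h₂

lemma simpleVertex_comp_iff {F : Type*} [FunLike F (BraidGroup 3) (BraidGroup 3)]
    [MonoidHomClass F (BraidGroup 3) (BraidGroup 3)] {f : F} (hf : Function.Injective f)
    {s : Fin 3 → BraidGroup 3} : SimpleVertex (f ∘ s) ↔ SimpleVertex s := by
  simp only [SimpleVertex, hurwitzAct_comp, hf.comp_left.eq_iff]

namespace FinTwoMatrix

open Matrix MatrixGroups

variable {R : Type*} [CommRing R]

lemma sq_eq_trace_smul_sub_det_smul_one (A : Matrix (Fin 2) (Fin 2) R) :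
    A ^ 2 = A.trace • A - A.det • 1 := by
  ext i j
  fin_cases i <;> fin_cases j <;>
    simp [pow_two, mul_apply, Fin.sum_univ_two, trace_fin_two, det_fin_two] <;> ring

lemma exists_smul_eq_smul_add_smul_of_commute {A : Matrix (Fin 2) (Fin 2) R}
    (hA : A ∉ Set.range (scalar (Fin 2))) :
    ∃ a ≠ (0 : R), ∀ B, Commute A B → ∃ b c : R, a • B = b • A + c • 1 := by
  have entries {B} (h : Commute A B) :
      A 0 1 * B 1 0 = A 1 0 * B 0 1 ∧ A 0 1 * (B 0 0 - B 1 1) = B 0 1 * (A 0 0 - A 1 1) ∧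
        A 1 0 * (B 0 0 - B 1 1) = B 1 0 * (A 0 0 - A 1 1) := by
    have h₀₀ := congr_fun₂ h.eq 0 0
    have h₀₁ := congr_fun₂ h.eq 0 1
    have h₁₀ := congr_fun₂ h.eq 1 0
    simp only [mul_apply, Fin.sum_univ_two] at h₀₀ h₀₁ h₁₀
    exact ⟨by linear_combination h₀₀, by linear_combination -h₀₁, by linear_combination h₁₀⟩
  have nonscalar : A 0 1 ≠ 0 ∨ A 1 0 ≠ 0 ∨ A 0 0 - A 1 1 ≠ 0 := by
    by_contra! h
    refine hA ⟨A 0 0, ?_⟩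
    ext i j
    fin_cases i <;> fin_cases j <;> simp [h.1, h.2.1, sub_eq_zero.1 h.2.2]
  rcases nonscalar with ha | ha | ha
  · refine ⟨A 0 1, ha, fun B hB ↦ ⟨B 0 1, A 0 1 * B 0 0 - B 0 1 * A 0 0, ?_⟩⟩
    obtain ⟨h₁, h₂, -⟩ := entries hB
    ext i j
    fin_cases i <;> fin_cases j <;> simp <;> grind
  · refine ⟨A 1 0, ha, fun B hB ↦ ⟨B 1 0, A 1 0 * B 0 0 - B 1 0 * A 0 0, ?_⟩⟩
    obtain ⟨h₁, -, h₃⟩ := entries hB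
    ext i j
    fin_cases i <;> fin_cases j <;> simp <;> grind
  · refine ⟨A 0 0 - A 1 1, ha, fun B hB ↦
      ⟨B 0 0 - B 1 1, A 0 0 * B 1 1 - A 1 1 * B 0 0, ?_⟩⟩
    obtain ⟨-, h₂, h₃⟩ := entries hB
    ext i j
    fin_cases i <;> fin_cases j <;> simp <;> grind

lemma commute_of_smul {ι : Type*} [Fintype ι] [IsDomain R] {a : R} (ha : a ≠ 0)
    {A B : Matrix ι ι R} (h : Commute (a • A) B) : Commute A B := by
  have := h.eq
  rw [smul_mul_assoc, mul_smul_comm] at this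
  exact smul_right_injective _ ha this

lemma commute_of_commute_of_nonscalar [IsDomain R] {A B C : Matrix (Fin 2) (Fin 2) R}
    (hA : A ∉ Set.range (scalar (Fin 2))) (hB : Commute A B) (hC : Commute A C) :
    Commute B C := by
  obtain ⟨a, ha, h⟩ := exists_smul_eq_smul_add_smul_of_commute hA
  obtain ⟨b, c, hb⟩ := h B hB
  refine commute_of_smul ha ?_
  rw [hb]
  exact (hC.smul_left b).add_left ((Commute.one_left C).smul_left c)

lemma exists_pow_succ_eq_smul_sub_smul_one [LinearOrder R] [IsStrictOrderedRing R]
    {A : Matrix (Fin 2) (Fin 2) R} (hdet : A.det = 1) (htr : 2 ≤ |A.trace|) (k : ℕ) :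
    ∃ p q : R, |q| < |p| ∧ A ^ (k + 1) = p • A - q • 1 := by
  induction k with
  | zero => exact ⟨1, 0, by simp, by simp⟩
  | succ k ih =>
    obtain ⟨p, q, hqp, hpow⟩ := ih
    refine ⟨p * A.trace - q, p, ?_, ?_⟩
    · have := abs_sub_abs_le_abs_sub (p * A.trace) q
      rw [abs_mul] at this
      nlinarith [abs_nonneg p]
    · rw [pow_succ, hpow, sub_mul, smul_mul_assoc, smul_mul_assoc, one_mul, ← pow_two,
        sq_eq_trace_smul_sub_det_smul_one, hdet]
      module

lemma commute_of_commute_pow [LinearOrder R] [IsStrictOrderedRing R]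
    {A B : Matrix (Fin 2) (Fin 2) R} (hdet : A.det = 1) (htr : 2 ≤ |A.trace|) {k : ℕ}
    (hk : k ≠ 0) (h : Commute (A ^ k) B) : Commute A B := by
  obtain ⟨k, rfl⟩ := Nat.exists_eq_succ_of_ne_zero hk
  obtain ⟨p, q, hqp, hpow⟩ := exists_pow_succ_eq_smul_sub_smul_one hdet htr k
  have hp : p ≠ 0 := abs_pos.1 ((abs_nonneg q).trans_lt hqp)
  refine commute_of_smul hp ?_
  rw [← sub_add_cancel (p • A) (q • 1), ← hpow]
  exact h.add_left ((Commute.one_left B).smul_left q)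

lemma coe_mem_range_scalar_iff {A : SL(2, R)} :
    (A : Matrix (Fin 2) (Fin 2) R) ∈ Set.range (scalar (Fin 2)) ↔ A ∈ Subgroup.center SL(2, R) := by
  rw [Matrix.SpecialLinearGroup.mem_center_iff]
  refine ⟨?_, fun ⟨r, _, hr⟩ ↦ ⟨r, hr⟩⟩
  rintro ⟨r, hr⟩
  refine ⟨r, ?_, hr⟩
  simpa [← hr] using A.det_coe

lemma apply_eq_zero_of_mem_center {A : SL(2, R)} (hA : A ∈ Subgroup.center SL(2, R))
    {i j : Fin 2} (hij : i ≠ j) : A i j = 0 := by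
  obtain ⟨r, hr⟩ := coe_mem_range_scalar_iff.2 hA
  rw [← hr]
  exact diagonal_apply_ne _ hij

lemma coe_commute_iff {A B : SL(2, R)} :
    Commute (A : Matrix (Fin 2) (Fin 2) R) B ↔ Commute A B :=
  ⟨fun h ↦ Subtype.ext h.eq, fun h ↦ congr_arg Subtype.val h.eq⟩

lemma mem_center_of_sq_eq_one [IsDomain R] [NeZero (2 : R)] {A : SL(2, R)} (hA : A ^ 2 = 1) :
    A ∈ Subgroup.center SL(2, R) := by
  rw [← coe_mem_range_scalar_iff]
  set M : Matrix (Fin 2) (Fin 2) R := A.val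
  have htwo : M.trace • M = (2 : R) • 1 := by
    have := sq_eq_trace_smul_sub_det_smul_one M
    rw [A.det_coe, one_smul, ← Matrix.SpecialLinearGroup.coe_pow, hA,
      Matrix.SpecialLinearGroup.coe_one, eq_sub_iff_add_eq] at this
    rw [← this]
    module
  have htr : M.trace ≠ 0 := by
    intro h
    refine NeZero.ne (2 : R) ?_
    simpa [h] using (congr_fun₂ htwo 0 0).symm
  have entry (i j : Fin 2) : M.trace * M i j = 2 * (1 : Matrix (Fin 2) (Fin 2) R) i j :=
    congr_fun₂ htwo i j
  have hdiag : M 1 1 = M 0 0 := mul_left_cancel₀ htr (by rw [entry, entry]; simp)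
  refine ⟨M 0 0, ?_⟩
  ext i j
  fin_cases i <;> fin_cases j
  · simp
  · simpa [htr, eq_comm] using entry 0 1
  · simpa [htr, eq_comm] using entry 1 0
  · simp [hdiag]

lemma commute_or_sq_or_cube_mem_center {A B : SL(2, ℤ)} {k : ℕ} (hk : k ≠ 0)
    (h : Commute (A ^ k) B) :
    Commute A B ∨ A ^ 2 ∈ Subgroup.center SL(2, ℤ) ∨ A ^ 3 ∈ Subgroup.center SL(2, ℤ) := by
  rcases le_or_gt 2 |trace (A : Matrix (Fin 2) (Fin 2) ℤ)| with htr | htr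
  · rw [← coe_commute_iff, Matrix.SpecialLinearGroup.coe_pow] at h
    exact .inl (coe_commute_iff.1 (commute_of_commute_pow A.det_coe htr hk h))
  right
  simp only [← coe_mem_range_scalar_iff, Matrix.SpecialLinearGroup.coe_pow]
  set M : Matrix (Fin 2) (Fin 2) ℤ := A.val
  have hsq : M ^ 2 = M.trace • M - 1 := by
    simpa [M] using sq_eq_trace_smul_sub_det_smul_one M
  have hcube : M ^ 3 = (M.trace ^ 2 - 1) • M - M.trace • 1 := by
    rw [pow_succ, hsq, sub_mul, smul_mul_assoc, one_mul, ← pow_two, hsq]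
    module
  have htrace : M.trace = 0 ∨ M.trace ^ 2 = 1 := by
    obtain ⟨hlo, hhi⟩ := abs_lt.1 htr
    interval_cases M.trace <;> simp
  rcases htrace with h | h
  · exact .inl ⟨-1, by simp [hsq, h]⟩
  · exact .inr ⟨-M.trace, by rw [hcube, h, sub_self, zero_smul, zero_sub, map_neg, scalar_apply,
      smul_one_eq_diagonal]⟩

end FinTwoMatrix

section ExponentSum

open scoped commutatorElement

variable {m : ℕ}

lemma esum_mul (β γ : BraidGroup m) : esum (β * γ) = esum β + esum γ := by
  simp [esum]

lemma esum_pow (β : BraidGroup m) (k : ℕ) : esum (β ^ k) = k * esum β := by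
  simp [esum]

lemma esum_zpow (β : BraidGroup m) (k : ℤ) : esum (β ^ k) = k * esum β := by
  simp [esum]

lemma esum_commutatorElement (β γ : BraidGroup m) : esum ⁅β, γ⁆ = 0 := by
  simp [esum, commutatorElement_def]

lemma esum_braidGen {i : ℕ} (hi : 1 ≤ i ∧ i ≤ m - 1) : esum (braidGen m i) = 1 := by
  rw [braidGen, dif_pos hi]
  exact congr_arg Multiplicative.toAdd (PresentedGroup.toGroup.of _)

end ExponentSum

namespace BraidGroup

open FinTwoMatrix Subgroup
open scoped MatrixGroups commutatorElement

local notation "σ₁" => braidGen 3 1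
local notation "σ₂" => braidGen 3 2

/-- The Garside half twist `σ₁ σ₂ σ₁` of `B_3`. -/
def halfTwist : BraidGroup 3 := σ₁ * σ₂ * σ₁

/-- The full twist of `B_3`, which generates the center. -/
def fullTwist : BraidGroup 3 := halfTwist ^ 2

lemma halfTwist_eq : halfTwist = σ₂ * σ₁ * σ₂ := by
  have h := PresentedGroup.one_of_mem (rels := braidRels 3)
    (x := .of 0 * .of 1 * .of 0 * (.of 1 * .of 0 * .of 1)⁻¹) (.inr ⟨0, 1, .inl rfl, rfl⟩)
  rw [map_mul, map_inv, mul_inv_eq_one] at h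
  exact h

lemma halfTwist_mul_gen_one : halfTwist * σ₁ = σ₂ * halfTwist := by
  conv_lhs => rw [halfTwist_eq]
  rw [halfTwist, mul_assoc, mul_assoc, mul_assoc]

lemma halfTwist_mul_gen_two : halfTwist * σ₂ = σ₁ * halfTwist := by
  conv_rhs => rw [halfTwist_eq]
  rw [halfTwist, mul_assoc, mul_assoc, mul_assoc]

lemma esum_fullTwist : esum fullTwist = 6 := by
  simp [fullTwist, halfTwist, esum_pow, esum_mul, esum_braidGen]

lemma gen_two_eq : σ₂ = σ₁⁻¹ * halfTwist * σ₁⁻¹ := by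
  simp [halfTwist, mul_assoc]

lemma closure_halfTwist_gen_one : closure {halfTwist, σ₁} = ⊤ := by
  have hΔ : halfTwist ∈ closure {halfTwist, σ₁} := subset_closure (by simp)
  have hσ₁ : σ₁ ∈ closure {halfTwist, σ₁} := subset_closure (by simp)
  have hσ₂ : σ₂ ∈ closure {halfTwist, σ₁} :=
    gen_two_eq ▸ mul_mem (mul_mem (inv_mem hσ₁) hΔ) (inv_mem hσ₁)
  rw [eq_top_iff, ← PresentedGroup.closure_range_of (braidRels 3), closure_le]
  rintro _ ⟨i, rfl⟩
  fin_cases i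
  exacts [hσ₁, hσ₂]

lemma fullTwist_mem_center : fullTwist ∈ center (BraidGroup 3) := by
  have hσ₁ : σ₁ * fullTwist = fullTwist * σ₁ := by
    rw [fullTwist, pow_two, ← mul_assoc, ← halfTwist_mul_gen_two, mul_assoc,
      ← halfTwist_mul_gen_one, mul_assoc]
  rw [← centralizer_univ, ← coe_top, ← closure_halfTwist_gen_one, centralizer_closure,
    mem_centralizer_iff]
  rintro g (rfl | rfl)
  · exact (Commute.self_pow _ _).eq
  · exact hσ₁

/-- The homomorphism `B_3 → SL(2, ℤ)` given by the reduced Burau representation at `t = -1`. -/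
def toSL : BraidGroup 3 →* SL(2, ℤ) :=
  PresentedGroup.toGroup (f := ![ModularGroup.T⁻¹,
    ModularGroup.S * ModularGroup.T⁻¹ * ModularGroup.S⁻¹]) <| by
    rintro r (⟨i, j, hij, rfl⟩ | ⟨i, j, hij, rfl⟩)
    · omega
    · rw [map_mul, map_inv, mul_inv_eq_one]
      fin_cases i <;> fin_cases j <;> first | omega | decide

lemma coe_toSL_gen_one : (toSL σ₁ : Matrix (Fin 2) (Fin 2) ℤ) = !![1, -1; 0, 1] := by
  have h : toSL σ₁ = ModularGroup.T⁻¹ := PresentedGroup.toGroup.of _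
  rw [h, ModularGroup.coe_T_inv]

lemma coe_toSL_gen_two : (toSL σ₂ : Matrix (Fin 2) (Fin 2) ℤ) = !![1, 0; 1, 1] := by
  have h : toSL σ₂ = ModularGroup.S * ModularGroup.T⁻¹ * ModularGroup.S⁻¹ :=
    PresentedGroup.toGroup.of _
  simp [h, ModularGroup.coe_S, ModularGroup.coe_T, Matrix.adjugate_fin_two_of]

lemma toSL_halfTwist : toSL halfTwist = ModularGroup.S := by
  ext i j
  fin_cases i <;> fin_cases j <;>
    simp [halfTwist, coe_toSL_gen_one, coe_toSL_gen_two, ModularGroup.S]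

lemma toSL_fullTwist : toSL fullTwist = -1 := by
  rw [fullTwist, map_pow, toSL_halfTwist, pow_two]
  exact Subtype.ext ModularGroup.S_mul_S_eq

lemma halfTwist_zpow_two_mul (j : ℤ) : halfTwist ^ (2 * j) = fullTwist ^ j := by
  rw [zpow_mul, fullTwist, zpow_ofNat]

lemma commute_fullTwist_zpow (g : BraidGroup 3) (j : ℤ) : Commute g (fullTwist ^ j) :=
  Subgroup.mem_center_iff.1 (zpow_mem fullTwist_mem_center j) g

/-- The submonoid generated by `σ₁⁻¹` and `σ₂`. It is chosen because `toSL` maps both generators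
to elementary matrices with nonnegative entries. -/
def alternatingMonoid : Submonoid (BraidGroup 3) := .closure {σ₁⁻¹, σ₂}

/-- The braids that lie in `alternatingMonoid` up to powers of the half twist on both sides. -/
def HasAlternatingForm (g : BraidGroup 3) : Prop :=
  ∃ k l : ℤ, ∃ w ∈ alternatingMonoid, g = halfTwist ^ k * w * halfTwist ^ l

namespace HasAlternatingForm

variable {g : BraidGroup 3}

lemma halfTwist_zpow_mul (hg : HasAlternatingForm g) (j : ℤ) :
    HasAlternatingForm (halfTwist ^ j * g) := by
  obtain ⟨k, l, w, hw, rfl⟩ := hg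
  exact ⟨j + k, l, w, hw, by simp only [zpow_add, mul_assoc]⟩

lemma inv_gen_one_mul_of_mem {w : BraidGroup 3} (hw : w ∈ alternatingMonoid) (l : ℤ) :
    HasAlternatingForm (σ₁⁻¹ * halfTwist * w * halfTwist ^ l) := by
  have hσ₁ : σ₁⁻¹ ∈ alternatingMonoid := Submonoid.subset_closure (by simp)
  have hσ₂ : σ₂ ∈ alternatingMonoid := Submonoid.subset_closure (by simp)
  induction hw using Submonoid.closure_induction_left with
  | one => exact ⟨0, l + 1, σ₁⁻¹, hσ₁, by group⟩
  | mul_left x hx w hw _ =>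
    obtain rfl | rfl := hx
    · exact ⟨0, l, σ₂ * w, mul_mem hσ₂ hw, by rw [gen_two_eq]; group⟩
    · refine ⟨1, l, w, hw, ?_⟩
      rw [← mul_assoc, mul_assoc _ halfTwist, halfTwist_mul_gen_two]
      group

lemma inv_gen_one_mul (hg : HasAlternatingForm g) : HasAlternatingForm (σ₁⁻¹ * g) := by
  obtain ⟨k, l, w, hw, rfl⟩ := hg
  obtain ⟨j, rfl | rfl⟩ := k.even_or_odd'
  · have hσ₁ : σ₁⁻¹ ∈ alternatingMonoid := Submonoid.subset_closure (by simp)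
    refine ⟨2 * j, l, σ₁⁻¹ * w, mul_mem hσ₁ hw, ?_⟩
    rw [halfTwist_zpow_two_mul, ← mul_assoc, ← mul_assoc, ← mul_assoc,
      (commute_fullTwist_zpow σ₁⁻¹ j).eq]
  · convert (inv_gen_one_mul_of_mem hw l).halfTwist_zpow_mul (2 * j) using 1
    rw [zpow_add_one, halfTwist_zpow_two_mul]
    simp only [← mul_assoc]
    rw [(commute_fullTwist_zpow σ₁⁻¹ j).eq]

lemma gen_one_mul (hg : HasAlternatingForm g) : HasAlternatingForm (σ₁ * g) := by
  have h : σ₁ = halfTwist ^ (1 : ℤ) * σ₁⁻¹ * halfTwist ^ (1 : ℤ) * σ₁⁻¹ * halfTwist ^ (-1 : ℤ) := by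
    rw [zpow_one, zpow_neg_one, eq_mul_inv_iff_mul_eq, ← halfTwist_mul_gen_two, gen_two_eq]
    simp only [mul_assoc]
  rw [h]
  simp only [mul_assoc]
  exact (((hg.halfTwist_zpow_mul _).inv_gen_one_mul.halfTwist_zpow_mul _).inv_gen_one_mul
    ).halfTwist_zpow_mul _

end HasAlternatingForm

lemma hasAlternatingForm (g : BraidGroup 3) : HasAlternatingForm g := by
  have hg : g ∈ closure {halfTwist, σ₁} := closure_halfTwist_gen_one ▸ mem_top g
  induction hg using closure_induction_left with
  | one => exact ⟨0, 0, 1, one_mem _, by simp⟩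
  | mul_left x hx g _ ih =>
    obtain rfl | rfl := hx
    · simpa using ih.halfTwist_zpow_mul 1
    · exact ih.gen_one_mul
  | inv_mul_cancel x hx g _ ih =>
    obtain rfl | rfl := hx
    · simpa using ih.halfTwist_zpow_mul (-1)
    · exact ih.inv_gen_one_mul

lemma toSL_entries_of_mem_alternatingMonoid {w : BraidGroup 3} (hw : w ∈ alternatingMonoid) :
    0 < toSL w 0 0 ∧ 0 < toSL w 1 1 ∧ 0 ≤ toSL w 0 1 ∧ 0 ≤ toSL w 1 0 ∧
      (w = 1 ∨ 0 < toSL w 0 1 + toSL w 1 0) := by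
  induction hw using Submonoid.closure_induction_left with
  | one => simp
  | mul_left x hx w _ ih =>
    obtain rfl | rfl := hx
    · have h : (toSL (σ₁⁻¹ * w) : Matrix (Fin 2) (Fin 2) ℤ) =
          !![toSL w 0 0 + toSL w 1 0, toSL w 0 1 + toSL w 1 1; toSL w 1 0, toSL w 1 1] := by
        ext i j
        fin_cases i <;> fin_cases j <;>
          simp [Matrix.mul_apply, coe_toSL_gen_one, Matrix.adjugate_fin_two]
      rw [h]
      simp only [Matrix.of_apply, Matrix.cons_val]
      grind
    · have h : (toSL (σ₂ * w) : Matrix (Fin 2) (Fin 2) ℤ) =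
          !![toSL w 0 0, toSL w 0 1; toSL w 0 0 + toSL w 1 0, toSL w 0 1 + toSL w 1 1] := by
        ext i j
        fin_cases i <;> fin_cases j <;> simp [Matrix.mul_apply, coe_toSL_gen_two]
      rw [h]
      simp only [Matrix.of_apply, Matrix.cons_val]
      grind

lemma eq_one_of_mem_alternatingMonoid_of_toSL_mem_center {w : BraidGroup 3}
    (hw : w ∈ alternatingMonoid) (h : toSL w ∈ center SL(2, ℤ)) : w = 1 := by
  have h₀₁ : toSL w 0 1 = 0 := apply_eq_zero_of_mem_center h (by decide)
  have h₁₀ : toSL w 1 0 = 0 := apply_eq_zero_of_mem_center h (by decide)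
  exact (toSL_entries_of_mem_alternatingMonoid hw).2.2.2.2.resolve_right (by simp [h₀₁, h₁₀])

lemma toSL_mul_halfTwist_notMem_center {w : BraidGroup 3} (hw : w ∈ alternatingMonoid) :
    toSL (w * halfTwist) ∉ center SL(2, ℤ) := by
  intro h
  have h₀₁ : toSL (w * halfTwist) 0 1 = -toSL w 0 0 := by
    simp [toSL_halfTwist, ModularGroup.coe_S, Matrix.mul_apply]
  have : toSL (w * halfTwist) 0 1 = 0 := apply_eq_zero_of_mem_center h (by decide)
  linarith [(toSL_entries_of_mem_alternatingMonoid hw).1]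

lemma comap_toSL_center : (center SL(2, ℤ)).comap toSL = zpowers fullTwist := by
  have hfull : fullTwist ∈ (center SL(2, ℤ)).comap toSL := by
    simp [mem_center_iff, toSL_fullTwist]
  refine le_antisymm (fun g hg ↦ ?_) (zpowers_le.2 hfull)
  obtain ⟨k, l, w, hw, rfl⟩ := hasAlternatingForm g
  rw [mul_assoc, Normal.mem_comm_iff inferInstance, mul_assoc, ← zpow_add] at hg
  obtain ⟨j, h | h⟩ := (l + k).even_or_odd'
  · rw [h, halfTwist_zpow_two_mul, mul_mem_cancel_right (zpow_mem hfull j)] at hg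
    rw [eq_one_of_mem_alternatingMonoid_of_toSL_mem_center hw hg, mul_one, ← zpow_add, add_comm, h,
      halfTwist_zpow_two_mul]
    exact zpow_mem (mem_zpowers _) j
  · rw [h, add_comm, zpow_one_add, halfTwist_zpow_two_mul, ← mul_assoc,
      mul_mem_cancel_right (zpow_mem hfull j)] at hg
    exact absurd hg (toSL_mul_halfTwist_notMem_center hw)

variable {g u v : BraidGroup 3}

lemma toSL_mem_center_iff : toSL g ∈ center SL(2, ℤ) ↔ g ∈ zpowers fullTwist := by
  rw [← comap_toSL_center, mem_comap]

lemma six_dvd_esum_of_mem_zpowers_fullTwist (hg : g ∈ zpowers fullTwist) : 6 ∣ esum g := by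
  obtain ⟨j, rfl⟩ := hg
  exact ⟨j, by simp only [esum_zpow, esum_fullTwist, mul_comm]⟩

lemma eq_one_of_mem_zpowers_fullTwist (hg : g ∈ zpowers fullTwist) (he : esum g = 0) : g = 1 := by
  obtain ⟨j, rfl⟩ := hg
  obtain rfl : j = 0 := by simpa [esum_zpow, esum_fullTwist] using he
  simp

lemma commute_toSL_iff : Commute (toSL u) (toSL v) ↔ Commute u v := by
  refine ⟨fun h ↦ ?_, fun h ↦ h.map toSL⟩
  rw [← commutatorElement_eq_one_iff_commute] at h ⊢
  refine eq_one_of_mem_zpowers_fullTwist ?_ (esum_commutatorElement u v)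
  rw [← toSL_mem_center_iff, map_commutatorElement, h]
  exact one_mem _

lemma commute_of_mem_zpowers_fullTwist (hg : g ∈ zpowers fullTwist) (u : BraidGroup 3) :
    Commute g u := by
  obtain ⟨j, rfl⟩ := hg
  exact (commute_fullTwist_zpow u j).symm

lemma commute_of_commute_of_notMem (hg : g ∉ zpowers fullTwist) (hu : Commute g u)
    (hv : Commute g v) : Commute u v := by
  rw [← commute_toSL_iff, ← coe_commute_iff] at hu hv ⊢
  rw [← toSL_mem_center_iff, ← coe_mem_range_scalar_iff] at hg
  exact commute_of_commute_of_nonscalar hg hu hv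

lemma mem_zpowers_fullTwist_of_sq_mem (hg : g ^ 2 ∈ zpowers fullTwist) (he : Even (esum g)) :
    g ∈ zpowers fullTwist := by
  obtain ⟨n, hn : fullTwist ^ n = g ^ 2⟩ := hg
  have hesum : n * 6 = 2 * esum g := by
    simpa [esum_zpow, esum_pow, esum_fullTwist] using congr_arg esum hn
  have hn_even : Even n := by
    rw [Int.even_iff] at he ⊢
    omega
  rw [← toSL_mem_center_iff]
  apply mem_center_of_sq_eq_one
  rw [← map_pow, ← hn, map_zpow, toSL_fullTwist, hn_even.neg_one_zpow]

lemma commute_or_sq_mem_of_commute_pow (he : Odd (esum g)) {k : ℕ} (hk : k ≠ 0)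
    (h : Commute (g ^ k) u) : Commute g u ∨ g ^ 2 ∈ zpowers fullTwist := by
  rw [← commute_toSL_iff, map_pow] at h
  have h_trichotomy := commute_or_sq_or_cube_mem_center hk h
  rw [← map_pow, ← map_pow, toSL_mem_center_iff, toSL_mem_center_iff, commute_toSL_iff,
    ← or_assoc] at h_trichotomy
  refine h_trichotomy.resolve_right fun hcube ↦ ?_
  have := six_dvd_esum_of_mem_zpowers_fullTwist hcube
  rw [esum_pow] at this
  rw [Int.odd_iff] at he
  omega

end BraidGroup

section LengthThree

open BraidGroup Subgroup

variable {s : Fin 3 → BraidGroup 3}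

lemma commute_or_sq_mem_zpowers_fullTwist (hfin : (hurwitzOrbit s).Finite)
    (hodd : Odd (esum (s 1 * s 2))) :
    Commute (s 1) (s 2) ∨ (s 1 * s 2) ^ 2 ∈ zpowers fullTwist := by
  obtain ⟨k, hk, hfix⟩ := exists_hurwitzAct_pow_eq_self hfin (genWord 3 2 ^ 2)
  have hcomm := (hurwitzAct_genWord_sq_pow_eq_self_iff.1 hfix).1
  refine (commute_or_sq_mem_of_commute_pow hodd hk hcomm).imp_left fun h ↦ ?_
  exact (mul_left_cancel ((mul_assoc _ _ _).symm.trans h.eq)).symm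

lemma hurwitzAct_cWord_sq (h : Commute (s 1) (s 2) ∨ (s 1 * s 2) ^ 2 ∈ zpowers fullTwist) :
    hurwitzAct ((cWord 3 1 * cWord 3 2) ^ 2) s =
      MulAut.conj ((s 0 * s 1 * s 2) ^ 2)⁻¹ ∘ s := by
  apply hurwitzAct_cWord_pow_of_genWord_fixed
  rw [hurwitzAct_genWord_sq_pow_eq_self_iff]
  rcases h with h | h
  · exact ⟨((Commute.refl _).mul_left h.symm).pow_left 2, (h.mul_left (.refl _)).pow_left 2⟩
  · exact ⟨commute_of_mem_zpowers_fullTwist h _, commute_of_mem_zpowers_fullTwist h _⟩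

lemma isReducible_of_prod_mem_zpowers_fullTwist
    (h : Commute (s 1) (s 2) ∨ (s 1 * s 2) ^ 2 ∈ zpowers fullTwist)
    (hprod : s 0 * s 1 * s 2 ∈ zpowers fullTwist) (hcop : IsCoprime (esum (s 0)) 6) :
    IsReducible s := by
  rcases h with h | h
  · have hs : s 0 = s 0 * s 1 * s 2 * (s 1 * s 2)⁻¹ := by simp [mul_assoc]
    have hcomm {u} (hu : Commute (s 1 * s 2) u) : Commute (s 0) u :=
      hs ▸ (commute_of_mem_zpowers_fullTwist hprod u).mul_left hu.inv_left
    exact isReducible_of_commute (hcomm ((Commute.refl _).mul_left h.symm))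
      (hcomm (h.mul_left (.refl _)))
  · have hdvd := six_dvd_esum_of_mem_zpowers_fullTwist h
    have hdvd_prod := six_dvd_esum_of_mem_zpowers_fullTwist hprod
    rw [esum_pow, esum_mul] at hdvd
    rw [esum_mul, esum_mul] at hdvd_prod
    have hthree : (3 : ℤ) ∣ esum (s 0) := by omega
    have := hcop.isUnit_of_dvd' hthree (by norm_num)
    exact absurd this (by decide)

lemma isReducible_of_commute_prod_sq
    (h : Commute (s 1) (s 2) ∨ (s 1 * s 2) ^ 2 ∈ zpowers fullTwist)
    (hcop : IsCoprime (esum (s 0)) 6) (hodd : Odd (esum (s 1 * s 2)))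
    (hcomm : ∀ i, Commute ((s 0 * s 1 * s 2) ^ 2) (s i)) : IsReducible s := by
  by_cases hsq : (s 0 * s 1 * s 2) ^ 2 ∈ zpowers fullTwist
  · refine isReducible_of_prod_mem_zpowers_fullTwist h
      (mem_zpowers_fullTwist_of_sq_mem hsq ?_) hcop
    rw [mul_assoc, esum_mul]
    refine Odd.add_odd ?_ hodd
    rw [← Int.isCoprime_two_right]
    exact hcop.of_isCoprime_of_dvd_right (by norm_num)
  · exact isReducible_of_commute (commute_of_commute_of_notMem hsq (hcomm 0) (hcomm 1))
      (commute_of_commute_of_notMem hsq (hcomm 0) (hcomm 2))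

end LengthThree

theorem period23_cword_square_general (s : Fin 3 → BraidGroup 3)
    (hirr : ¬ IsReducible s)
    (hfin : (hurwitzOrbit s).Finite)
    (hcop : IsCoprime (esum (s 0)) 6)
    (hodd : Odd (esum (s 1) + esum (s 2))) :
    hurwitzAct ((cWord 3 1 * cWord 3 2) ^ 2) s ≠ s ∧
      (SimpleVertex (hurwitzAct ((cWord 3 1 * cWord 3 2) ^ 2) s) ↔ SimpleVertex s) := by
  rw [← esum_mul] at hodd
  have h := commute_or_sq_mem_zpowers_fullTwist hfin hodd
  rw [hurwitzAct_cWord_sq h]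
  refine ⟨fun hfix ↦ hirr (isReducible_of_commute_prod_sq h hcop hodd fun i ↦ ?_), ?_⟩
  · rw [← inv_mul_mul_eq_self_iff_commute]
    simpa only [Function.comp_apply, MulAut.conj_apply, inv_inv] using congr_fun hfix i
  · exact simpleVertex_comp_iff (MulEquiv.injective (MulAut.conj _))

lemma isCoprime_six_of_modEq {a : ℤ} (ha : a ≡ 1 [ZMOD 6] ∨ a ≡ -1 [ZMOD 6]) :
    IsCoprime a 6 := by
  rcases ha.imp Int.ModEq.dvd Int.ModEq.dvd with ⟨k, hk⟩ | ⟨k, hk⟩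
  · exact ⟨1, k, by linarith⟩
  · exact ⟨-1, -k, by linarith⟩

/-- For an irreducible `(2,3)`-periodic system with finite Hurwitz orbit:
(1) `s·(c_1 c_2)^2 ≠ s`, and (2) `s·(c_1 c_2)^2` is a simple vertex iff `s` is. -/
theorem period23_cword_square (s : Fin 3 → BraidGroup 3)
    (hirr : ¬ IsReducible s)
    (hfin : (hurwitzOrbit s).Finite)
    (h1 : Int.ModEq 6 (esum (s 0)) 1 ∨ Int.ModEq 6 (esum (s 0)) (-1))
    (h2 : Int.ModEq 6 (esum (s 1)) 2 ∨ Int.ModEq 6 (esum (s 1)) (-2))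
    (h3 : Int.ModEq 6 (esum (s 2)) 1 ∨ Int.ModEq 6 (esum (s 2)) (-1)) :
    hurwitzAct ((cWord 3 1 * cWord 3 2) ^ 2) s ≠ s ∧
      (SimpleVertex (hurwitzAct ((cWord 3 1 * cWord 3 2) ^ 2) s) ↔ SimpleVertex s) := by
  have hodd : Odd (esum (s 1) + esum (s 2)) := by
    simp only [Int.ModEq, Int.odd_iff] at h2 h3 ⊢
    omega
  exact period23_cword_square_general s hirr hfin (isCoprime_six_of_modEq h1) hodd
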